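/- There exists a constant β > 0, depending only on the instance μ (and the family b) and not on the allocation, with the following property: for every allocation N = (N_1,…,N_K) ∈ ℝ_{>0}^K with g(μ, N) = 0 and every nonempty B ⊆ {2,…,K} such that W_a(N_1, N_a) takes a common value I_B for all a ∈ B and W_a(N_1, N_a) > I_B for all a ∈ B̄^c, the fluid derivative of the common index, given explicitly by I_B' = (I_B·h(B) + h(N)) / ((N_1 + Σ_{a∈B} N_a)·h(B) + d_B^{-1}·h(N)), satisfies I_B' > β. -/

import Mathlib

open scoped BigOperators

/-- A single-parameter exponential family, given by the log-partition function `b`,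
smooth with positive second derivative on an open interval `Θ`, together with the
inverse `θof` of `b'` on the set of means `S = b'(Θ)`. -/
structure SPEF where
  Θ : Set ℝ
  Θ_isOpen : IsOpen Θ
  Θ_ordConnected : Set.OrdConnected Θ
  Θ_nonempty : Θ.Nonempty
  b : ℝ → ℝ
  b_smooth : ContDiffOn ℝ (⊤ : ℕ∞) b Θ
  b_conv : ∀ t ∈ Θ, 0 < iteratedDeriv 2 b t
  θof : ℝ → ℝ
  θof_mem : ∀ μ ∈ deriv b '' Θ, θof μ ∈ Θ
  θof_spec : ∀ μ ∈ deriv b '' Θ, deriv b (θof μ) = μ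

namespace SPEF

/-- The set of means of the family. -/
def S (F : SPEF) : Set ℝ := deriv F.b '' F.Θ

/-- KL divergence `d(μ, x)` between the members of the family with means `μ` and `x`. -/
noncomputable def d (F : SPEF) (μ x : ℝ) : ℝ :=
  (F.θof μ - F.θof x) * μ - F.b (F.θof μ) + F.b (F.θof x)

end SPEF

/-- A `K`-armed bandit instance with arm distributions in a fixed SPEF; arm `0`
(the paper's arm `1`) is the unique best arm. -/
structure Bandit (K : ℕ) [NeZero K] extends SPEF where
  two_le : 2 ≤ K
  μ : Fin K → ℝ
  μ_mem : ∀ a, μ a ∈ SPEF.S toSPEF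
  μ_best : ∀ a : Fin K, a ≠ 0 → μ a < μ 0

namespace Bandit

variable {K : ℕ} [NeZero K]

/-- KL divergence of the underlying family. -/
noncomputable def d (M : Bandit K) : ℝ → ℝ → ℝ := M.toSPEF.d

/-- The weighted mean `x_{1,a}(N₁, N_a)`. -/
noncomputable def x1 (M : Bandit K) (a : Fin K) (N1 Na : ℝ) : ℝ :=
  (N1 * M.μ 0 + Na * M.μ a) / (N1 + Na)

/-- The index `W_a(N₁, N_a)` of an arm `a ≠ 1`. -/
noncomputable def W (M : Bandit K) (a : Fin K) (N1 Na : ℝ) : ℝ :=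
  N1 * M.d (M.μ 0) (M.x1 a N1 Na) + Na * M.d (M.μ a) (M.x1 a N1 Na)

/-- The set `{2, …, K}` of suboptimal arms. -/
def alt (K : ℕ) [NeZero K] : Finset (Fin K) := Finset.univ.filter (fun a => a ≠ 0)

/-- The anchor function `g(μ, N)`. -/
noncomputable def g (M : Bandit K) (Nv : Fin K → ℝ) : ℝ :=
  (∑ a ∈ alt K, M.d (M.μ 0) (M.x1 a (Nv 0) (Nv a)) / M.d (M.μ a) (M.x1 a (Nv 0) (Nv a))) - 1

end Bandit

open Bandit

namespace Bandit

variable {K : ℕ} [NeZero K]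

/-- Partial derivative of the KL divergence `d` in its second argument. -/
noncomputable def d2 (M : Bandit K) (μv x : ℝ) : ℝ := deriv (fun y => M.d μv y) x

/-- The quantity `f(μ, a, N)`, the negative of the derivative of `g` w.r.t. `x_{1,a}`. -/
noncomputable def fq (M : Bandit K) (a : Fin K) (Nv : Fin K → ℝ) : ℝ :=
  (M.d (M.μ 0) (M.x1 a (Nv 0) (Nv a)) / M.d (M.μ a) (M.x1 a (Nv 0) (Nv a))) *
    (M.d2 (M.μ a) (M.x1 a (Nv 0) (Nv a)) / M.d (M.μ a) (M.x1 a (Nv 0) (Nv a)) -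
      M.d2 (M.μ 0) (M.x1 a (Nv 0) (Nv a)) / M.d (M.μ 0) (M.x1 a (Nv 0) (Nv a)))

/-- The quantity `h_a(μ, N₁, N_a) = f(μ, a, N)·N₁²·Δ_a/(N₁+N_a)²`. -/
noncomputable def hq (M : Bandit K) (a : Fin K) (Nv : Fin K → ℝ) : ℝ :=
  M.fq a Nv * ((Nv 0) ^ 2 * (M.μ 0 - M.μ a) / (Nv 0 + Nv a) ^ 2)

/-- The quantity `h(B) = Σ_{a∈B} h_a·d_{a,a}⁻¹`. -/
noncomputable def hB (M : Bandit K) (B : Finset (Fin K)) (Nv : Fin K → ℝ) : ℝ :=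
  ∑ a ∈ B, M.hq a Nv / M.d (M.μ a) (M.x1 a (Nv 0) (Nv a))

/-- The quantity `h(N) = Σ_{a∈B̄ᶜ} h_a·N_a`. -/
noncomputable def hN (M : Bandit K) (B : Finset (Fin K)) (Nv : Fin K → ℝ) : ℝ :=
  ∑ a ∈ alt K \ B, M.hq a Nv * Nv a

/-- The quantity `d_B = (Σ_{a∈B} d_{a,a}⁻¹)⁻¹`. -/
noncomputable def dB (M : Bandit K) (B : Finset (Fin K)) (Nv : Fin K → ℝ) : ℝ :=
  (∑ a ∈ B, (M.d (M.μ a) (M.x1 a (Nv 0) (Nv a)))⁻¹)⁻¹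

end Bandit

/-!
Put `x = x_{1,a}`, so that `N_a (x - μ_a) = N₁ (μ_1 - x)`. On the anchor curve the ratios
`r_a = d_{1,a} / d_{a,a}` sum to `1`, so every `r_a ≤ 1` and `x` lies in a compact interval that
stays away from `μ_a`. There `d_{a,a} ≥ c` and `c h_a ≤ d_{a,a}`. Near `μ_1`, `d_{1,a}` vanishes
quadratically in `μ_1 - x`, while `N_a / N₁` and `h_a` vanish only linearly, so
`c r_a N₁ ≤ min 1 h_a * N_a`. Summing the last bound over all arms gives
`c N₁ ≤ ∑_{a ∈ B} N_a + h(N)`, and with it the denominator of `I_B'` is at most a constant times its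
numerator.
-/

open Filter Set Topology

theorem eventually_nhdsGT_zero_forall_mul_le_of_isCompact {X : Type*} [TopologicalSpace X]
    {s : Set X} (hs : IsCompact s) {f g : X → ℝ} (hf : ContinuousOn f s) (hg : ContinuousOn g s)
    (hpos : ∀ x ∈ s, 0 < g x) : ∀ᶠ c in 𝓝[>] (0 : ℝ), ∀ x ∈ s, c * f x ≤ g x := by
  obtain ⟨C, hC⟩ := hs.exists_bound_of_continuousOn (hf.div hg fun x hx ↦ (hpos x hx).ne')
  have hlim : Tendsto (fun c : ℝ ↦ c * C) (𝓝[>] 0) (𝓝 0) :=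
    ((continuous_mul_const C).tendsto' 0 0 (zero_mul C)).mono_left nhdsWithin_le_nhds
  filter_upwards [hlim.eventually_le_const one_pos, self_mem_nhdsWithin] with c hcC hc x hx
  rw [← div_le_one (hpos x hx), mul_div_assoc]
  exact (mul_le_mul_of_nonneg_left ((le_abs_self _).trans (hC x hx)) (mem_Ioi.1 hc).le).trans hcC

theorem exists_mem_uIoo_hasDerivAt_eq_sub {f f' : ℝ → ℝ} {a b : ℝ} (hab : a ≠ b)
    (hf : ∀ x ∈ uIcc a b, HasDerivAt f (f' x) x) :
    ∃ c ∈ uIoo a b, f' c * (b - a) = f b - f a := by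
  wlog h : a < b generalizing a b
  · obtain ⟨c, hc, hslope⟩ :=
      this hab.symm (by rwa [uIcc_comm]) (hab.symm.lt_of_le (not_lt.1 h))
    exact ⟨c, by rwa [uIoo_comm], by linarith⟩
  rw [uIcc_of_lt h] at hf
  obtain ⟨c, hc, hslope⟩ := exists_hasDerivAt_eq_slope f f' h
    (HasDerivAt.continuousOn hf) fun x hx ↦ hf x (Ioo_subset_Icc_self hx)
  exact ⟨c, Ioo_subset_uIoo hc, by rw [hslope, div_mul_cancel₀ _ (sub_ne_zero.2 hab.symm)]⟩

theorem sum_le_card_univ_mul {ι R : Type*} [Fintype ι] [Semiring R] [PartialOrder R]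
    [IsOrderedRing R] (s : Finset ι) {f : ι → R} {t : R} (ht : 0 ≤ t) (hf : ∀ i ∈ s, f i ≤ t) :
    ∑ i ∈ s, f i ≤ Fintype.card ι * t := by
  calc ∑ i ∈ s, f i ≤ s.card * t := by simpa using Finset.sum_le_card_nsmul s f t hf
    _ ≤ Fintype.card ι * t := by gcongr; exact s.card_le_univ

namespace SPEF

variable (F : SPEF) {m m₁ x : ℝ}

theorem contDiffOn_deriv_b : ContDiffOn ℝ (⊤ : ℕ∞) (deriv F.b) F.Θ :=
  F.b_smooth.deriv_of_isOpen F.Θ_isOpen (by simp)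

theorem continuousOn_iteratedDeriv_two_b : ContinuousOn (iteratedDeriv 2 F.b) F.Θ := by
  rw [iteratedDeriv_succ, iteratedDeriv_one]
  exact F.contDiffOn_deriv_b.continuousOn_deriv_of_isOpen F.Θ_isOpen (by simp)

theorem hasStrictDerivAt_deriv_b {t : ℝ} (ht : t ∈ F.Θ) :
    HasStrictDerivAt (deriv F.b) (iteratedDeriv 2 F.b t) t := by
  rw [iteratedDeriv_succ, iteratedDeriv_one]
  exact (F.contDiffOn_deriv_b.contDiffAt (F.Θ_isOpen.mem_nhds ht)).hasStrictDerivAt (by simp)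

theorem strictMonoOn_deriv_b : StrictMonoOn (deriv F.b) F.Θ :=
  strictMonoOn_of_deriv_pos F.Θ_ordConnected.convex F.contDiffOn_deriv_b.continuousOn
    fun t ht ↦ by
      rw [(F.hasStrictDerivAt_deriv_b (interior_subset ht)).hasDerivAt.deriv]
      exact F.b_conv t (interior_subset ht)

theorem ordConnected_S : F.S.OrdConnected :=
  (F.Θ_ordConnected.isPreconnected.image _ F.contDiffOn_deriv_b.continuousOn).ordConnected

theorem θof_deriv_b {t : ℝ} (ht : t ∈ F.Θ) : F.θof (deriv F.b t) = t :=
  have hmem := mem_image_of_mem (deriv F.b) ht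
  F.strictMonoOn_deriv_b.injOn (F.θof_mem _ hmem) ht (F.θof_spec _ hmem)

/-- The inverse variance as a function of the mean; it is the derivative of `θof`. -/
noncomputable def invVar (x : ℝ) : ℝ := (iteratedDeriv 2 F.b (F.θof x))⁻¹

theorem invVar_pos (hx : x ∈ F.S) : 0 < F.invVar x :=
  inv_pos.2 (F.b_conv _ (F.θof_mem x hx))

theorem hasDerivAt_θof (hx : x ∈ F.S) : HasDerivAt F.θof (F.invVar x) x := by
  have ht := F.θof_mem x hx
  have hinv : ∀ᶠ t in 𝓝 (F.θof x), F.θof (deriv F.b t) = t := by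
    filter_upwards [F.Θ_isOpen.mem_nhds ht] with t ht using F.θof_deriv_b ht
  have hderiv := (F.hasStrictDerivAt_deriv_b ht).to_local_left_inverse (F.b_conv _ ht).ne' hinv
  rw [F.θof_spec x hx] at hderiv
  exact hderiv.hasDerivAt

theorem continuousOn_invVar : ContinuousOn F.invVar F.S :=
  (F.continuousOn_iteratedDeriv_two_b.comp (HasDerivAt.continuousOn fun _ ↦ F.hasDerivAt_θof)
    F.θof_mem).inv₀ fun x hx ↦ (F.b_conv _ (F.θof_mem x hx)).ne'

theorem hasDerivAt_d (m : ℝ) (hx : x ∈ F.S) :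
    HasDerivAt (F.d m) ((x - m) * F.invVar x) x := by
  have hb : HasDerivAt F.b (deriv F.b (F.θof x)) (F.θof x) :=
    ((F.b_smooth.contDiffAt (F.Θ_isOpen.mem_nhds (F.θof_mem x hx))).differentiableAt
      (by simp)).hasDerivAt
  rw [F.θof_spec x hx] at hb
  have hθ := F.hasDerivAt_θof hx
  exact ((((hθ.const_sub (F.θof m)).mul_const m).sub_const (F.b (F.θof m))).add
    (hb.comp x hθ)).congr_deriv (by ring)

theorem continuousOn_d (m : ℝ) : ContinuousOn (F.d m) F.S :=
  HasDerivAt.continuousOn fun _ ↦ F.hasDerivAt_d m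

theorem d_self (m : ℝ) : F.d m m = 0 := by simp [d]

theorem exists_mem_uIoo_d_eq (hm : m ∈ F.S) (hx : x ∈ F.S) (hne : m ≠ x) :
    ∃ ξ ∈ uIoo m x, F.d m x = (ξ - m) * F.invVar ξ * (x - m) := by
  obtain ⟨ξ, hξ, h⟩ := exists_mem_uIoo_hasDerivAt_eq_sub hne fun y hy ↦
    F.hasDerivAt_d m (F.ordConnected_S.uIcc_subset hm hx hy)
  exact ⟨ξ, hξ, by rw [h, d_self, sub_zero]⟩

theorem d_pos (hm : m ∈ F.S) (hx : x ∈ F.S) (hne : m ≠ x) : 0 < F.d m x := by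
  obtain ⟨ξ, hξ, hd⟩ := F.exists_mem_uIoo_d_eq hm hx hne
  have hv := F.invVar_pos (F.ordConnected_S.uIcc_subset hm hx (uIoo_subset_uIcc_self hξ))
  rw [hd, mul_right_comm]
  refine mul_pos ?_ hv
  rcases hne.lt_or_gt with h | h
  · rw [uIoo_of_lt h] at hξ
    exact mul_pos (sub_pos.2 hξ.1) (sub_pos.2 h)
  · rw [uIoo_of_gt h] at hξ
    exact mul_pos_of_neg_of_neg (sub_neg.2 hξ.2) (sub_neg.2 h)

theorem d_nonneg (hm : m ∈ F.S) (hx : x ∈ F.S) : 0 ≤ F.d m x := by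
  rcases eq_or_ne m x with rfl | hne
  · exact (F.d_self m).ge
  · exact (F.d_pos hm hx hne).le

theorem d_le_mul_sq {L : ℝ} (hm : m ∈ F.S) (hx : x ∈ F.S) (hL : ∀ y ∈ uIcc m x, F.invVar y ≤ L) :
    F.d m x ≤ L * (x - m) ^ 2 := by
  rcases eq_or_ne m x with rfl | hne
  · simp [d_self]
  obtain ⟨ξ, hξ, hd⟩ := F.exists_mem_uIoo_d_eq hm hx hne
  have hξ := uIoo_subset_uIcc_self hξ
  have hv := F.invVar_pos (F.ordConnected_S.uIcc_subset hm hx hξ)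
  have hprod : (ξ - m) * (x - m) ≤ (x - m) ^ 2 := by
    rcases mem_uIcc.1 hξ with h | h <;> nlinarith
  calc F.d m x = F.invVar ξ * ((ξ - m) * (x - m)) := by rw [hd]; ring
    _ ≤ F.invVar ξ * (x - m) ^ 2 := by gcongr
    _ ≤ L * (x - m) ^ 2 := by gcongr; exact hL ξ hξ

theorem exists_forall_d_le_mul_sq (hm : m ∈ F.S) (hm₁ : m₁ ∈ F.S) :
    ∃ L : ℝ, ∀ x ∈ Icc m m₁, F.d m₁ x ≤ L * (m₁ - x) ^ 2 := by
  have hS : Icc m m₁ ⊆ F.S := F.ordConnected_S.out hm hm₁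
  obtain ⟨L, hL⟩ := isCompact_Icc.exists_bound_of_continuousOn (F.continuousOn_invVar.mono hS)
  refine ⟨L, fun x hx ↦ ?_⟩
  rw [sub_sq_comm]
  refine F.d_le_mul_sq hm₁ (hS hx) fun y hy ↦ (le_abs_self _).trans (hL y ?_)
  rw [uIcc_of_ge hx.2] at hy
  exact ⟨hx.1.trans hy.1, hy.2⟩

/-- The points of `[m, m₁]` at least as far from `m` as from `m₁` in KL divergence: the interval
from the Chernoff point of `m` and `m₁` to `m₁`. -/
def chernoffInterval (m m₁ : ℝ) : Set ℝ := {x ∈ Icc m m₁ | F.d m₁ x ≤ F.d m x}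

/-- The paper's `h_a = N₁ ∂g/∂N_a` as a function of the weighted mean `x` of `m = μ_a` and
`m₁ = μ_1`. -/
noncomputable def anchorRate (m m₁ x : ℝ) : ℝ :=
  F.invVar x * (x - m) ^ 2 / ((m₁ - m) * F.d m x) * (F.d m₁ x / F.d m x * (x - m) + (m₁ - x))

theorem anchorRate_pos (hm : m ∈ F.S) (hm₁ : m₁ ∈ F.S) (hx : x ∈ Ioo m m₁) :
    0 < F.anchorRate m m₁ x := by
  have hxS := F.ordConnected_S.out hm hm₁ (Ioo_subset_Icc_self hx)
  have hv := F.invVar_pos hxS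
  have hd := F.d_pos hm hxS hx.1.ne
  have hd₁ := F.d_pos hm₁ hxS hx.2.ne'
  have hmx := sub_pos.2 hx.1
  have hxm₁ := sub_pos.2 hx.2
  have hΔ := sub_pos.2 (hx.1.trans hx.2)
  unfold anchorRate
  positivity

section ChernoffInterval

variable {F} (hm : m ∈ F.S) (hm₁ : m₁ ∈ F.S)

include hm hm₁

theorem chernoffInterval_subset_S : F.chernoffInterval m m₁ ⊆ F.S :=
  (sep_subset _ _).trans (F.ordConnected_S.out hm hm₁)

theorem isCompact_chernoffInterval : IsCompact (F.chernoffInterval m m₁) := by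
  have hS : Icc m m₁ ⊆ F.S := F.ordConnected_S.out hm hm₁
  exact isCompact_Icc.of_isClosed_subset (isClosed_Icc.isClosed_le
    ((F.continuousOn_d m₁).mono hS) ((F.continuousOn_d m).mono hS)) (sep_subset _ _)

theorem lt_of_mem_chernoffInterval (hlt : m < m₁) (hx : x ∈ F.chernoffInterval m m₁) : m < x := by
  refine hx.1.1.lt_of_ne ?_
  rintro rfl
  have hle := hx.2
  rw [d_self] at hle
  exact hle.not_gt (F.d_pos hm₁ hm hlt.ne')

theorem d_pos_of_mem_chernoffInterval (hlt : m < m₁) (hx : x ∈ F.chernoffInterval m m₁) :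
    0 < F.d m x :=
  F.d_pos hm (chernoffInterval_subset_S hm hm₁ hx) (lt_of_mem_chernoffInterval hm hm₁ hlt hx).ne

theorem eventually_forall_le_d (hlt : m < m₁) :
    ∀ᶠ c in 𝓝[>] 0, ∀ x ∈ F.chernoffInterval m m₁, c ≤ F.d m x := by
  simpa using eventually_nhdsGT_zero_forall_mul_le_of_isCompact (f := fun _ ↦ 1)
    (isCompact_chernoffInterval hm hm₁) continuousOn_const
    ((F.continuousOn_d m).mono (chernoffInterval_subset_S hm hm₁))
    fun _ ↦ d_pos_of_mem_chernoffInterval hm hm₁ hlt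

theorem continuousOn_anchorRate (hlt : m < m₁) :
    ContinuousOn (F.anchorRate m m₁) (F.chernoffInterval m m₁) := by
  have hS := chernoffInterval_subset_S hm hm₁
  have hv := F.continuousOn_invVar.mono hS
  have hd := (F.continuousOn_d m).mono hS
  have hd₁ := (F.continuousOn_d m₁).mono hS
  have hd_ne : ∀ x ∈ F.chernoffInterval m m₁, F.d m x ≠ 0 :=
    fun x hx ↦ (d_pos_of_mem_chernoffInterval hm hm₁ hlt hx).ne'
  unfold anchorRate
  fun_prop (disch := grind [mul_ne_zero])

theorem eventually_forall_mul_anchorRate_le_d (hlt : m < m₁) :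
    ∀ᶠ c in 𝓝[>] 0, ∀ x ∈ F.chernoffInterval m m₁, c * F.anchorRate m m₁ x ≤ F.d m x :=
  eventually_nhdsGT_zero_forall_mul_le_of_isCompact (isCompact_chernoffInterval hm hm₁)
    (continuousOn_anchorRate hm hm₁ hlt)
    ((F.continuousOn_d m).mono (chernoffInterval_subset_S hm hm₁))
    fun _ ↦ d_pos_of_mem_chernoffInterval hm hm₁ hlt

theorem eventually_forall_mul_ratio_mul_sub_le (hlt : m < m₁) :
    ∀ᶠ c in 𝓝[>] 0, ∀ x ∈ F.chernoffInterval m m₁,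
      c * (F.d m₁ x / F.d m x) * (x - m) ≤ m₁ - x := by
  obtain ⟨L, hL⟩ := F.exists_forall_d_le_mul_sq hm hm₁
  have hsmall := eventually_nhdsGT_zero_forall_mul_le_of_isCompact
    (f := fun x ↦ L * (m₁ - x) * (x - m)) (isCompact_chernoffInterval hm hm₁) (by fun_prop)
    ((F.continuousOn_d m).mono (chernoffInterval_subset_S hm hm₁))
    fun _ ↦ d_pos_of_mem_chernoffInterval hm hm₁ hlt
  filter_upwards [hsmall, self_mem_nhdsWithin] with c hcx hc x hx
  have hd := d_pos_of_mem_chernoffInterval hm hm₁ hlt hx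
  have hxm := sub_pos.2 (lt_of_mem_chernoffInterval hm hm₁ hlt hx)
  have hxm₁ := sub_nonneg.2 hx.1.2
  have hc := (mem_Ioi.1 hc).le
  calc c * (F.d m₁ x / F.d m x) * (x - m)
      ≤ c * (L * (m₁ - x) ^ 2 / F.d m x) * (x - m) := by gcongr; exact hL x hx.1
    _ = c * (L * (m₁ - x) * (x - m)) / F.d m x * (m₁ - x) := by ring
    _ ≤ 1 * (m₁ - x) := by gcongr; exact (div_le_one hd).2 (hcx x hx)
    _ = m₁ - x := one_mul _

theorem eventually_forall_mul_ratio_mul_sub_le_anchorRate_mul (hlt : m < m₁) :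
    ∀ᶠ c in 𝓝[>] 0, ∀ x ∈ F.chernoffInterval m m₁,
      c * (F.d m₁ x / F.d m x) * (x - m) ≤ F.anchorRate m m₁ x * (m₁ - x) := by
  obtain ⟨L, hL⟩ := F.exists_forall_d_le_mul_sq hm hm₁
  have hS := chernoffInterval_subset_S hm hm₁
  have hv := F.continuousOn_invVar.mono hS
  have hsmall := eventually_nhdsGT_zero_forall_mul_le_of_isCompact
    (f := fun _ ↦ L * (m₁ - m)) (g := fun x ↦ F.invVar x * (x - m))
    (isCompact_chernoffInterval hm hm₁) (by fun_prop) (by fun_prop) fun x hx ↦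
      mul_pos (F.invVar_pos (hS hx)) (sub_pos.2 (lt_of_mem_chernoffInterval hm hm₁ hlt hx))
  filter_upwards [hsmall, self_mem_nhdsWithin] with c hcx hc x hx
  have hv := F.invVar_pos (hS hx)
  have hd := d_pos_of_mem_chernoffInterval hm hm₁ hlt hx
  have hd₁ := F.d_nonneg hm₁ (hS hx)
  have hxm := sub_pos.2 (lt_of_mem_chernoffInterval hm hm₁ hlt hx)
  have hxm₁ := sub_nonneg.2 hx.1.2
  have hΔ := sub_pos.2 hlt
  have hc := (mem_Ioi.1 hc).le
  calc c * (F.d m₁ x / F.d m x) * (x - m)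
      ≤ c * (L * (m₁ - x) ^ 2 / F.d m x) * (x - m) := by gcongr; exact hL x hx.1
    _ = c * (L * (m₁ - m)) * ((x - m) / ((m₁ - m) * F.d m x) * (m₁ - x) ^ 2) := by
      field_simp
    _ ≤ F.invVar x * (x - m) * ((x - m) / ((m₁ - m) * F.d m x) * (m₁ - x) ^ 2) := by
      exact mul_le_mul_of_nonneg_right (hcx x hx) (by positivity)
    _ = F.invVar x * (x - m) ^ 2 / ((m₁ - m) * F.d m x) * (0 + (m₁ - x)) * (m₁ - x) := by ring
    _ ≤ F.anchorRate m m₁ x * (m₁ - x) := by unfold anchorRate; gcongr; positivity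

end ChernoffInterval

end SPEF

namespace Bandit

variable {K : ℕ} [NeZero K] (M : Bandit K) {Nv : Fin K → ℝ} {a : Fin K}

/-- The paper's `d_{1,a}`. -/
noncomputable abbrev dBest (Nv : Fin K → ℝ) (a : Fin K) : ℝ :=
  M.d (M.μ 0) (M.x1 a (Nv 0) (Nv a))

/-- The paper's `d_{a,a}`. -/
noncomputable abbrev dArm (Nv : Fin K → ℝ) (a : Fin K) : ℝ :=
  M.d (M.μ a) (M.x1 a (Nv 0) (Nv a))

section Arm

variable {M}

theorem μ_lt_of_mem_alt (ha : a ∈ alt K) : M.μ a < M.μ 0 :=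
  M.μ_best a (Finset.mem_filter.1 ha).2

theorem d2_eq (m : ℝ) {x : ℝ} (hx : x ∈ M.S) : M.d2 m x = (x - m) * M.invVar x :=
  (M.hasDerivAt_d m hx).deriv

theorem x1_sub_eq {n₁ n : ℝ} (hn : n₁ + n ≠ 0) :
    M.x1 a n₁ n - M.μ a = n₁ * (M.μ 0 - M.μ a) / (n₁ + n) := by
  unfold x1
  field_simp
  ring

theorem sub_x1_eq {n₁ n : ℝ} (hn : n₁ + n ≠ 0) :
    M.μ 0 - M.x1 a n₁ n = n * (M.μ 0 - M.μ a) / (n₁ + n) := by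
  unfold x1
  field_simp
  ring

variable (hpos : ∀ a, 0 < Nv a) (ha : a ∈ alt K)

include hpos ha

theorem x1_mem_Ioo : M.x1 a (Nv 0) (Nv a) ∈ Ioo (M.μ a) (M.μ 0) := by
  have hs : 0 < Nv 0 + Nv a := add_pos (hpos 0) (hpos a)
  have hΔ := sub_pos.2 (M.μ_lt_of_mem_alt ha)
  refine ⟨sub_pos.1 ?_, sub_pos.1 ?_⟩
  · rw [x1_sub_eq hs.ne']
    exact div_pos (mul_pos (hpos 0) hΔ) hs
  · rw [sub_x1_eq hs.ne']
    exact div_pos (mul_pos (hpos a) hΔ) hs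

theorem x1_mem_S : M.x1 a (Nv 0) (Nv a) ∈ M.S :=
  M.ordConnected_S.out (M.μ_mem a) (M.μ_mem 0) (Ioo_subset_Icc_self (x1_mem_Ioo hpos ha))

theorem dBest_pos : 0 < M.dBest Nv a :=
  M.d_pos (M.μ_mem 0) (x1_mem_S hpos ha) (x1_mem_Ioo hpos ha).2.ne'

theorem dArm_pos : 0 < M.dArm Nv a :=
  M.d_pos (M.μ_mem a) (x1_mem_S hpos ha) (x1_mem_Ioo hpos ha).1.ne

theorem W_pos : 0 < M.W a (Nv 0) (Nv a) :=
  add_pos (mul_pos (hpos 0) (dBest_pos hpos ha)) (mul_pos (hpos a) (dArm_pos hpos ha))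

theorem hq_eq_anchorRate :
    M.hq a Nv = M.anchorRate (M.μ a) (M.μ 0) (M.x1 a (Nv 0) (Nv a)) := by
  have hxS := M.x1_mem_S hpos ha
  have hd₁ := (M.dBest_pos hpos ha).ne'
  have hd := (M.dArm_pos hpos ha).ne'
  have hΔ := (sub_pos.2 (M.μ_lt_of_mem_alt ha)).ne'
  have hs := (add_pos (hpos 0) (hpos a)).ne'
  have hweight : Nv 0 ^ 2 * (M.μ 0 - M.μ a) / (Nv 0 + Nv a) ^ 2 =
      (M.x1 a (Nv 0) (Nv a) - M.μ a) ^ 2 / (M.μ 0 - M.μ a) := by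
    rw [x1_sub_eq hs]
    field_simp
  unfold hq fq SPEF.anchorRate
  rw [hweight, d2_eq _ hxS, d2_eq _ hxS, show M.toSPEF.d = M.d from rfl]
  field_simp
  ring

theorem hq_pos : 0 < M.hq a Nv := by
  rw [hq_eq_anchorRate hpos ha]
  exact M.anchorRate_pos (M.μ_mem a) (M.μ_mem 0) (x1_mem_Ioo hpos ha)

theorem mul_count_le_of_mul_sub_le {s t : ℝ}
    (h : s * (M.x1 a (Nv 0) (Nv a) - M.μ a) ≤ t * (M.μ 0 - M.x1 a (Nv 0) (Nv a))) :
    s * Nv 0 ≤ t * Nv a := by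
  have hs := add_pos (hpos 0) (hpos a)
  rw [x1_sub_eq hs.ne', sub_x1_eq hs.ne', mul_div_assoc, mul_div_assoc, ← mul_assoc,
    ← mul_assoc] at h
  exact le_of_mul_le_mul_right h (div_pos (sub_pos.2 (M.μ_lt_of_mem_alt ha)) hs)

end Arm

section Anchor

variable {M}

theorem sum_dBest_div_dArm (hg : M.g Nv = 0) : ∑ a ∈ alt K, M.dBest Nv a / M.dArm Nv a = 1 :=
  sub_eq_zero.1 hg

theorem x1_mem_chernoffInterval (hpos : ∀ a, 0 < Nv a) (hg : M.g Nv = 0) (ha : a ∈ alt K) :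
    M.x1 a (Nv 0) (Nv a) ∈ M.chernoffInterval (M.μ a) (M.μ 0) := by
  refine ⟨Ioo_subset_Icc_self (x1_mem_Ioo hpos ha), (div_le_one (dArm_pos hpos ha)).1 ?_⟩
  rw [← sum_dBest_div_dArm hg]
  exact Finset.single_le_sum (f := fun a ↦ M.dBest Nv a / M.dArm Nv a)
    (fun i hi ↦ (div_pos (dBest_pos hpos hi) (dArm_pos hpos hi)).le) ha

/-- Bounds on the suboptimal arms of the allocation `Nv` that control the fluid derivative of the
index. On the anchor curve a single `c > 0` serves all allocations (`eventually_rateBounds`). -/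
structure RateBounds (M : Bandit K) (Nv : Fin K → ℝ) (c : ℝ) : Prop where
  le_dArm : ∀ a ∈ alt K, c ≤ M.dArm Nv a
  mul_hq_le : ∀ a ∈ alt K, c * M.hq a Nv ≤ M.dArm Nv a
  mul_ratio_mul_best_le : ∀ a ∈ alt K, c * (M.dBest Nv a / M.dArm Nv a) * Nv 0 ≤ Nv a
  mul_ratio_mul_best_le_hq_mul : ∀ a ∈ alt K,
    c * (M.dBest Nv a / M.dArm Nv a) * Nv 0 ≤ M.hq a Nv * Nv a

variable (M) in
theorem eventually_rateBounds :
    ∀ᶠ c in 𝓝[>] 0, ∀ Nv : Fin K → ℝ, (∀ a, 0 < Nv a) → M.g Nv = 0 → M.RateBounds Nv c := by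
  have hlt (a) (ha : a ∈ alt K) := M.μ_lt_of_mem_alt ha
  filter_upwards [
    (alt K).eventually_all.2 fun a ha ↦
      SPEF.eventually_forall_le_d (M.μ_mem a) (M.μ_mem 0) (hlt a ha),
    (alt K).eventually_all.2 fun a ha ↦
      SPEF.eventually_forall_mul_anchorRate_le_d (M.μ_mem a) (M.μ_mem 0) (hlt a ha),
    (alt K).eventually_all.2 fun a ha ↦
      SPEF.eventually_forall_mul_ratio_mul_sub_le (M.μ_mem a) (M.μ_mem 0) (hlt a ha),
    (alt K).eventually_all.2 fun a ha ↦
      SPEF.eventually_forall_mul_ratio_mul_sub_le_anchorRate_mul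
        (M.μ_mem a) (M.μ_mem 0) (hlt a ha)] with c hd hrate hratio hratio' Nv hpos hg
  have hx (a) (ha : a ∈ alt K) := x1_mem_chernoffInterval hpos hg ha
  refine ⟨fun a ha ↦ hd a ha _ (hx a ha), fun a ha ↦ ?_, fun a ha ↦ ?_, fun a ha ↦ ?_⟩
  · rw [hq_eq_anchorRate hpos ha]
    exact hrate a ha _ (hx a ha)
  · rw [← one_mul (Nv a)]
    refine mul_count_le_of_mul_sub_le (M := M) hpos ha ?_
    rw [one_mul]
    exact hratio a ha _ (hx a ha)
  · rw [hq_eq_anchorRate hpos ha]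
    exact mul_count_le_of_mul_sub_le hpos ha (hratio' a ha _ (hx a ha))

end Anchor

section FluidDerivative

variable {M} {B : Finset (Fin K)} {c I : ℝ}

theorem hB_pos (hpos : ∀ a, 0 < Nv a) (hne : B.Nonempty) (hsub : B ⊆ alt K) : 0 < M.hB B Nv :=
  Finset.sum_pos (fun _ ha ↦ div_pos (hq_pos hpos (hsub ha)) (dArm_pos hpos (hsub ha))) hne

theorem hN_nonneg (hpos : ∀ a, 0 < Nv a) : 0 ≤ M.hN B Nv :=
  Finset.sum_nonneg fun a ha ↦
    (mul_pos (hq_pos hpos (Finset.mem_sdiff.1 ha).1) (hpos a)).le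

theorem inv_dB_nonneg (hpos : ∀ a, 0 < Nv a) (hsub : B ⊆ alt K) : 0 ≤ (M.dB B Nv)⁻¹ := by
  rw [Bandit.dB, inv_inv]
  exact Finset.sum_nonneg fun _ ha ↦ (inv_pos.2 (dArm_pos hpos (hsub ha))).le

namespace RateBounds

variable (h : M.RateBounds Nv c) (hsub : B ⊆ alt K)

include h hsub

theorem mul_best_le (hg : M.g Nv = 0) : c * Nv 0 ≤ ∑ a ∈ B, Nv a + M.hN B Nv := by
  calc c * Nv 0 = ∑ a ∈ alt K, c * (M.dBest Nv a / M.dArm Nv a) * Nv 0 := by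
        rw [← Finset.sum_mul, ← Finset.mul_sum, sum_dBest_div_dArm hg, mul_one]
    _ = ∑ a ∈ B, c * (M.dBest Nv a / M.dArm Nv a) * Nv 0 +
        ∑ a ∈ alt K \ B, c * (M.dBest Nv a / M.dArm Nv a) * Nv 0 := by
      rw [add_comm, Finset.sum_sdiff hsub]
    _ ≤ ∑ a ∈ B, Nv a + M.hN B Nv := add_le_add
      (Finset.sum_le_sum fun a ha ↦ h.mul_ratio_mul_best_le a (hsub ha))
      (Finset.sum_le_sum fun a ha ↦
        h.mul_ratio_mul_best_le_hq_mul a (Finset.mem_sdiff.1 ha).1)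

theorem mul_sum_le (hpos : ∀ a, 0 < Nv a) (hI : 0 ≤ I) (hW : ∀ a ∈ B, M.W a (Nv 0) (Nv a) ≤ I) :
    c * ∑ a ∈ B, Nv a ≤ K * I := by
  rw [Finset.mul_sum]
  refine (sum_le_card_univ_mul B hI fun a ha ↦ ?_).trans_eq (by rw [Fintype.card_fin])
  calc c * Nv a ≤ M.dArm Nv a * Nv a :=
        mul_le_mul_of_nonneg_right (h.le_dArm a (hsub ha)) (hpos a).le
    _ ≤ M.W a (Nv 0) (Nv a) := by
      rw [W, mul_comm]
      exact le_add_of_nonneg_left (mul_pos (hpos 0) (dBest_pos hpos (hsub ha))).le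
    _ ≤ I := hW a ha

theorem mul_hB_le (hpos : ∀ a, 0 < Nv a) : c * M.hB B Nv ≤ K := by
  rw [Bandit.hB, Finset.mul_sum]
  refine (sum_le_card_univ_mul B zero_le_one fun a ha ↦ ?_).trans_eq (by simp)
  rw [← mul_div_assoc]
  exact (div_le_one (dArm_pos hpos (hsub ha))).2 (h.mul_hq_le a (hsub ha))

theorem mul_inv_dB_le (hpos : ∀ a, 0 < Nv a) : c * (M.dB B Nv)⁻¹ ≤ K := by
  rw [Bandit.dB, inv_inv, Finset.mul_sum]
  refine (sum_le_card_univ_mul B zero_le_one fun a ha ↦ ?_).trans_eq (by simp)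
  rw [← div_eq_mul_inv]
  exact (div_le_one (dArm_pos hpos (hsub ha))).2 (h.le_dArm a (hsub ha))

theorem sq_mul_denominator_le (hc : 0 < c) (hpos : ∀ a, 0 < Nv a) (hg : M.g Nv = 0)
    (hne : B.Nonempty) (hI : 0 ≤ I) (hW : ∀ a ∈ B, M.W a (Nv 0) (Nv a) ≤ I) :
    c ^ 2 * ((Nv 0 + ∑ a ∈ B, Nv a) * M.hB B Nv + (M.dB B Nv)⁻¹ * M.hN B Nv) ≤
      K * (1 + c) * (I * M.hB B Nv + M.hN B Nv) := by
  have hhB := (M.hB_pos hpos hne hsub).le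
  have hhN : 0 ≤ M.hN B Nv := M.hN_nonneg hpos
  calc c ^ 2 * ((Nv 0 + ∑ a ∈ B, Nv a) * M.hB B Nv + (M.dB B Nv)⁻¹ * M.hN B Nv)
      = c * (c * Nv 0) * M.hB B Nv + c * (c * ∑ a ∈ B, Nv a) * M.hB B Nv +
          c * (c * (M.dB B Nv)⁻¹) * M.hN B Nv := by ring
    _ ≤ c * (∑ a ∈ B, Nv a + M.hN B Nv) * M.hB B Nv + c * (K * I) * M.hB B Nv +
          c * K * M.hN B Nv := by
      gcongr c * ?_ * _ + c * ?_ * _ + c * ?_ * _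
      · exact h.mul_best_le hsub hg
      · exact h.mul_sum_le hsub hpos hI hW
      · exact h.mul_inv_dB_le hsub hpos
    _ = (c * ∑ a ∈ B, Nv a) * M.hB B Nv + (c * M.hB B Nv) * M.hN B Nv +
          c * K * (I * M.hB B Nv + M.hN B Nv) := by ring
    _ ≤ K * I * M.hB B Nv + K * M.hN B Nv + c * K * (I * M.hB B Nv + M.hN B Nv) := by
      gcongr ?_ * _ + ?_ * _ + _
      · exact h.mul_sum_le hsub hpos hI hW
      · exact h.mul_hB_le hsub hpos
    _ = K * (1 + c) * (I * M.hB B Nv + M.hN B Nv) := by ring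

end RateBounds

end FluidDerivative

end Bandit

theorem statement_9_general {K : ℕ} [NeZero K] (M : Bandit K) :
    ∃ β : ℝ, 0 < β ∧
      ∀ Nv : Fin K → ℝ, (∀ a, 0 < Nv a) → M.g Nv = 0 →
      ∀ B : Finset (Fin K), B.Nonempty → B ⊆ alt K →
      ∀ I : ℝ, (∀ a ∈ B, M.W a (Nv 0) (Nv a) ≤ I) →
        β <
          (I * M.hB B Nv + M.hN B Nv) /
            ((Nv 0 + ∑ a ∈ B, Nv a) * M.hB B Nv + (M.dB B Nv)⁻¹ * M.hN B Nv) := by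
  obtain ⟨c, hrate, hc : 0 < c⟩ := (M.eventually_rateBounds.and self_mem_nhdsWithin).exists
  refine ⟨c ^ 2 / (K * (1 + c) + 1), by positivity, fun Nv hpos hg B hne hsub I hW ↦ ?_⟩
  have hI : 0 < I := by
    obtain ⟨a, ha⟩ := hne
    exact (M.W_pos hpos (hsub ha)).trans_le (hW a ha)
  have hhB := M.hB_pos hpos hne hsub
  have hhN : 0 ≤ M.hN B Nv := M.hN_nonneg hpos
  have hdB := M.inv_dB_nonneg hpos hsub
  have hsum : 0 ≤ ∑ a ∈ B, Nv a := Finset.sum_nonneg fun a _ ↦ (hpos a).le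
  have hnum : 0 < I * M.hB B Nv + M.hN B Nv := by positivity
  have hden : 0 < (Nv 0 + ∑ a ∈ B, Nv a) * M.hB B Nv + (M.dB B Nv)⁻¹ * M.hN B Nv := by
    have := hpos 0
    positivity
  rw [div_lt_div_iff₀ (by positivity) hden]
  linarith [(hrate Nv hpos hg).sq_mul_denominator_le hsub hc hpos hg hne hI.le hW]

/-- Lemma: the common minimal index grows at a uniformly positive rate:
the fluid derivative of the common index of the minimum-index set `B` exceeds a constant
`β > 0` depending only on the instance. -/
theorem statement_9 {K : ℕ} [NeZero K] (M : Bandit K) :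
    ∃ β : ℝ, 0 < β ∧
      ∀ Nv : Fin K → ℝ, (∀ a, 0 < Nv a) → M.g Nv = 0 →
      ∀ B : Finset (Fin K), B.Nonempty → B ⊆ alt K →
      ∀ IB : ℝ,
        (∀ a ∈ B, M.W a (Nv 0) (Nv a) = IB) →
        (∀ a ∈ alt K \ B, IB < M.W a (Nv 0) (Nv a)) →
        β <
          (IB * M.hB B Nv + M.hN B Nv) /
            ((Nv 0 + ∑ a ∈ B, Nv a) * M.hB B Nv + (M.dB B Nv)⁻¹ * M.hN B Nv) := by
  obtain ⟨β, hβ, h⟩ := statement_9_general M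
  exact ⟨β, hβ, fun Nv hpos hg B hne hsub IB hIB _ ↦
    h Nv hpos hg B hne hsub IB fun a ha ↦ (hIB a ha).le⟩
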